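/- arXiv:2010.16371 — 6 statements merged into one kernel-verified Lean document; each statement's English description precedes it below -/
import Mathlib

section
/- Let Ω = [[ω₁₁, ω₁₂],[ω₁₂, ω₂₂]] be a 2×2 complex symmetric matrix whose imaginary part is positive definite. Then ω₁₁ ≠ 0 and Im(-1/ω₁₁) · Im((ω₁₁ω₂₂ - ω₁₂²)/ω₁₁) > (Im(ω₁₂/ω₁₁))². -/
/-!
Writing `s = ω₁₂ / ω₁₁`, the two factors of the product are `Im ω₁₁ / |ω₁₁|²` and
`Im (ω₂₂ - s² ω₁₁)`. Expanding `(Im (s ω₁₁))²` then shows that the difference of the two sides is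
`det (Im Ω) / |ω₁₁|²`. Conceptually, the partial inversion
`Ω ↦ [[-1/ω₁₁, ω₁₂/ω₁₁], [ω₁₂/ω₁₁, det Ω/ω₁₁]]` is a symplectic transformation, and such a
transformation scales `det (Im Ω)` by a positive factor, here `1 / |ω₁₁|²`.
-/

theorem neg_one_div_im (z : ℂ) : (-1 / z).im = z.im / Complex.normSq z := by
  rw [neg_div, one_div, Complex.neg_im, Complex.inv_im, neg_div, neg_neg]

theorem mul_im_sq (s z : ℂ) :
    (s * z).im ^ 2 = z.im * (s ^ 2 * z).im + s.im ^ 2 * Complex.normSq z := by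
  simp only [pow_two s, Complex.mul_im, Complex.mul_re, Complex.normSq_apply]
  ring

theorem partial_inversion_im_mul_im_sub_im_sq {z : ℂ} (hz : z ≠ 0) (w u : ℂ) :
    (-1 / z).im * ((z * u - w ^ 2) / z).im - (w / z).im ^ 2 =
      (z.im * u.im - w.im ^ 2) / Complex.normSq z := by
  obtain ⟨s, rfl⟩ : ∃ s, w = s * z := ⟨w / z, (div_mul_cancel₀ w hz).symm⟩
  have hnorm : Complex.normSq z ≠ 0 := Complex.normSq_eq_zero.not.mpr hz
  have hschur : (z * u - (s * z) ^ 2) / z = u - s ^ 2 * z := by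
    field_simp
  rw [neg_one_div_im, hschur, mul_div_cancel_right₀ s hz, mul_im_sq, Complex.sub_im]
  field_simp
  ring

theorem stmt_0_general (ω11 ω12 ω22 : ℂ)
    (hdet : 0 < (!![ω11.im, ω12.im; ω12.im, ω22.im] : Matrix (Fin 2) (Fin 2) ℝ).det) :
    ω11 ≠ 0 ∧
      ((ω12 / ω11).im) ^ 2 < (-1 / ω11).im * (((ω11 * ω22 - ω12 ^ 2) / ω11).im) := by
  rw [Matrix.det_fin_two_of, ← pow_two] at hdet
  have hω : ω11 ≠ 0 := by
    rintro rfl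
    rw [Complex.zero_im, zero_mul] at hdet
    linarith [sq_nonneg ω12.im]
  refine ⟨hω, sub_pos.mp ?_⟩
  rw [partial_inversion_im_mul_im_sub_im_sq hω]
  exact div_pos hdet (Complex.normSq_pos.mpr hω)

/-- **Lemma (Siegel upper half-space inequality).**
Let `Ω = [[ω₁₁, ω₁₂],[ω₁₂, ω₂₂]]` be a 2×2 complex symmetric matrix whose imaginary part is
positive definite.  Then `ω₁₁ ≠ 0` and
`Im(-1/ω₁₁) · Im((ω₁₁ω₂₂ - ω₁₂²)/ω₁₁) > (Im(ω₁₂/ω₁₁))²`. -/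
theorem stmt_0 (ω11 ω12 ω22 : ℂ)
    (hpos : (!![ω11.im, ω12.im; ω12.im, ω22.im] : Matrix (Fin 2) (Fin 2) ℝ).PosDef) :
    ω11 ≠ 0 ∧
      ((ω12 / ω11).im) ^ 2 < (-1 / ω11).im * (((ω11 * ω22 - ω12 ^ 2) / ω11).im) :=
  stmt_0_general ω11 ω12 ω22 hpos.det_pos
end

section
/- Let Ω = [[ω₁₁, ω₁₂],[ω₁₂, ω₂₂]] be a 2×2 complex symmetric matrix whose imaginary part is positive definite. Then ω₁₁ ≠ 0, and there exist τ₁, τ₂ ∈ ℂ with Im τ₁ > 0 > Im τ₂ such that ω₁₁z² + 2ω₁₂z + ω₂₂ = ω₁₁(z - τ₁)(z - τ₂) for all z ∈ ℂ. In other words, the quadratic polynomial 2·Q_Ω((z,1)ᵀ) has exactly one root in the upper half-plane and one root in the lower half-plane. -/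
/-!
If `p` and `q` are the roots of `a z² + 2 b z + c`, then Vieta's formulas and the identity
`Im a * Im (a p q) = Im (a p) * Im (a q) - |a|² * Im p * Im q` give
`Im a * Im c - (Im b)² = -|a|² * Im p * Im q - (Im (a p) - Im (a q))² / 4`.
Hence positivity of the left-hand side forces `Im p` and `Im q` to have opposite signs.
-/

open Polynomial in
theorem exists_vieta_quadratic {K : Type*} [Field K] [IsAlgClosed K] {a : K} (ha : a ≠ 0)
    (b c : K) : ∃ p q : K, b = -a * (p + q) ∧ c = a * p * q := by
  have card_roots : (C a * X ^ 2 + C b * X + C c).roots.card = 2 :=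
    IsAlgClosed.card_roots_eq_natDegree.trans (natDegree_quadratic ha)
  obtain ⟨p, q, roots_eq⟩ := Multiset.card_eq_two.mp card_roots
  exact ⟨p, q, (roots_quadratic_eq_pair_iff_of_ne_zero ha).mp roots_eq⟩

theorem im_mul_im_mul_mul (a p q : ℂ) :
    a.im * (a * p * q).im = (a * p).im * (a * q).im - Complex.normSq a * (p.im * q.im) := by
  simp only [Complex.mul_im, Complex.mul_re, Complex.normSq_apply]
  ring

theorem im_mul_im_neg_of_vieta {a b c p q : ℂ} (hb : 2 * b = -a * (p + q)) (hc : c = a * p * q)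
    (hdet : 0 < a.im * c.im - b.im * b.im) : p.im * q.im < 0 := by
  have im_b : 2 * b.im = -((a * p).im + (a * q).im) := by
    have im_eq := congrArg Complex.im hb
    rwa [two_mul, Complex.add_im, ← two_mul, neg_mul, mul_add, Complex.neg_im,
      Complex.add_im] at im_eq
  have am_gm : (a * p).im * (a * q).im ≤ b.im * b.im := by
    have four_mul_le := four_mul_le_sq_add (a * p).im (a * q).im
    rw [← neg_sq, ← im_b] at four_mul_le
    linarith
  have weighted_neg : Complex.normSq a * (p.im * q.im) < 0 := by
    rw [hc, im_mul_im_mul_mul] at hdet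
    linarith
  exact neg_of_mul_neg_right weighted_neg (Complex.normSq_nonneg a)

theorem stmt_2_general (ω11 ω12 ω22 : ℂ)
    (hdet : 0 < (!![ω11.im, ω12.im; ω12.im, ω22.im] : Matrix (Fin 2) (Fin 2) ℝ).det) :
    ω11 ≠ 0 ∧
      ∃ τ1 τ2 : ℂ, 0 < τ1.im ∧ τ2.im < 0 ∧
        ∀ z : ℂ, ω11 * z ^ 2 + 2 * ω12 * z + ω22 = ω11 * (z - τ1) * (z - τ2) := by
  rw [Matrix.det_fin_two_of] at hdet
  have ω11_ne_zero : ω11 ≠ 0 := by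
    rintro rfl
    rw [Complex.zero_im, zero_mul, zero_sub] at hdet
    exact (neg_nonpos.mpr (mul_self_nonneg ω12.im)).not_gt hdet
  obtain ⟨p, q, hb, hc⟩ := exists_vieta_quadratic ω11_ne_zero (2 * ω12) ω22
  refine ⟨ω11_ne_zero, ?_⟩
  rcases mul_neg_iff.mp (im_mul_im_neg_of_vieta hb hc hdet) with ⟨hp, hq⟩ | ⟨hp, hq⟩
  · exact ⟨p, q, hp, hq, fun z ↦ by linear_combination z * hb + hc⟩
  · exact ⟨q, p, hq, hp, fun z ↦ by linear_combination z * hb + hc⟩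

/-- **Lemma (roots of the quadratic form).**
Let `Ω = [[ω₁₁, ω₁₂],[ω₁₂, ω₂₂]]` be a 2×2 complex symmetric matrix whose imaginary part is
positive definite.  Then `ω₁₁ ≠ 0` and there exist `τ₁, τ₂ ∈ ℂ` with `Im τ₁ > 0 > Im τ₂`
such that `ω₁₁z² + 2ω₁₂z + ω₂₂ = ω₁₁(z - τ₁)(z - τ₂)` for all `z ∈ ℂ`. -/
theorem stmt_2 (ω11 ω12 ω22 : ℂ)
    (hpos : (!![ω11.im, ω12.im; ω12.im, ω22.im] : Matrix (Fin 2) (Fin 2) ℝ).PosDef) :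
    ω11 ≠ 0 ∧
      ∃ τ1 τ2 : ℂ, 0 < τ1.im ∧ τ2.im < 0 ∧
        ∀ z : ℂ, ω11 * z ^ 2 + 2 * ω12 * z + ω22 = ω11 * (z - τ1) * (z - τ2) :=
  stmt_2_general ω11 ω12 ω22 hpos.det_pos
end

section
/- Let z ∈ ℂ with Re z > 0 and s ∈ ℂ with Re s > 0. Then ∫₀^∞ exp(-tz)·(tz)^{s-1}·z dt = Γ(s), where (tz)^{s-1} denotes the principal complex power and Γ is the complex Gamma function. (Equivalently: the integral of e^{-u}u^{s-1} du along the ray from 0 through z equals Γ(s).) -/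
/-!
On the positive real axis, `∫₀^∞ e^{-tz} t^{s-1} dt = z^{-s} Γ(s)` is a change of variables. Both
sides are holomorphic in `z` on the right half-plane: the left one is a Laplace integral, which may
be differentiated under the integral sign strictly inside its half-plane of convergence. The
identity theorem extends the formula to `Re z > 0`, and scaling by `z^s` gives the integral along
the ray, since `(tz)^{s-1} = t^{s-1} z^{s-1}` for `t > 0`.
-/

open MeasureTheory Set Filter Topology Complex

section VectorValued

variable {E : Type*} [NormedAddCommGroup E] [NormedSpace ℂ E]

/-- The Laplace integral of `g` converges absolutely at `z`. -/
def LaplaceIntegrable (g : ℝ → E) (z : ℂ) : Prop :=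
  IntegrableOn (fun t : ℝ ↦ cexp (-(t * z)) • g t) (Ioi 0)

/-- The one-sided Laplace transform of `g` at `z`, equal to `0` where the integral does not converge
absolutely. -/
noncomputable def laplaceIntegral (g : ℝ → E) (z : ℂ) : E :=
  ∫ t in Ioi (0 : ℝ), cexp (-(t * z)) • g t

lemma norm_cexp_neg_ofReal_mul (t : ℝ) (z : ℂ) :
    ‖cexp (-(t * z))‖ = Real.exp (-(t * z.re)) := by
  rw [norm_exp, neg_re, re_ofReal_mul]

lemma mul_exp_neg_mul_le {t a x δ : ℝ} (ht : 0 ≤ t) (hδ : 0 < δ) (hx : a + δ ≤ x) :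
    t * Real.exp (-(t * x)) ≤ δ⁻¹ * Real.exp (-(t * a)) := by
  have decay : t * δ * Real.exp (-(t * δ)) ≤ 1 :=
    (Real.mul_exp_neg_le_exp_neg_one _).trans (Real.exp_le_one_iff.2 (by norm_num))
  calc t * Real.exp (-(t * x))
      ≤ t * Real.exp (-(t * (a + δ))) := by gcongr
    _ = δ⁻¹ * (t * δ * Real.exp (-(t * δ))) * Real.exp (-(t * a)) := by
      rw [mul_add, neg_add, Real.exp_add]
      field_simp
    _ ≤ δ⁻¹ * 1 * Real.exp (-(t * a)) := by gcongr
    _ = δ⁻¹ * Real.exp (-(t * a)) := by rw [mul_one]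

lemma LaplaceIntegrable.mono_re {g : ℝ → E} {w z : ℂ} (hg : LaplaceIntegrable g w)
    (hwz : w.re ≤ z.re) : LaplaceIntegrable g z := by
  have factor_le : ∀ᵐ t : ℝ ∂volume.restrict (Ioi 0), ‖cexp (-(t * (z - w)))‖ ≤ 1 := by
    filter_upwards [ae_restrict_mem measurableSet_Ioi] with t ht
    rw [norm_cexp_neg_ofReal_mul, Real.exp_le_one_iff, sub_re, neg_nonpos]
    exact mul_nonneg (le_of_lt ht) (sub_nonneg.2 hwz)
  have factor_meas : AEStronglyMeasurable (fun t : ℝ ↦ cexp (-(t * (z - w))))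
      (volume.restrict (Ioi 0)) := by fun_prop
  refine (Integrable.bdd_smul hg 1 factor_meas factor_le).congr (ae_of_all _ fun t ↦ ?_)
  simp only [Pi.smul_apply', smul_smul, ← Complex.exp_add]
  ring_nf

lemma hasDerivAt_cexp_neg_mul_smul (c : ℂ) (x : E) (z : ℂ) :
    HasDerivAt (fun u ↦ cexp (-(c * u)) • x) (-(cexp (-(c * z)) • c • x)) z := by
  convert! ((hasDerivAt_id z).const_mul c).fun_neg.cexp.smul_const x using 1
  simp [mul_smul]

lemma hasDerivAt_laplaceIntegral {g : ℝ → E} {w z : ℂ} (hg : LaplaceIntegrable g w)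
    (hwz : w.re < z.re) :
    HasDerivAt (laplaceIntegral g) (-laplaceIntegral (fun t ↦ (t : ℂ) • g t) z) z := by
  obtain ⟨δ, hδ, hδz⟩ : ∃ δ > 0, w.re + δ < z.re :=
    ⟨(z.re - w.re) / 2, by linarith, by linarith⟩
  have half_plane_mem : {u : ℂ | w.re + δ < u.re} ∈ 𝓝 z :=
    (isOpen_lt continuous_const continuous_re).mem_nhds hδz
  have deriv_meas : AEStronglyMeasurable (fun t : ℝ ↦ -(cexp (-(t * z)) • (t : ℂ) • g t))
      (volume.restrict (Ioi 0)) := by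
    have hmeas := (hg.mono_re hwz.le).aestronglyMeasurable
    simp_rw [smul_comm (cexp _)]
    exact (AEStronglyMeasurable.smul (by fun_prop) hmeas).neg
  have deriv_le : ∀ᵐ t : ℝ ∂volume.restrict (Ioi 0), ∀ u ∈ {u : ℂ | w.re + δ < u.re},
      ‖-(cexp (-(t * u)) • (t : ℂ) • g t)‖ ≤ δ⁻¹ * ‖cexp (-(t * w)) • g t‖ := by
    filter_upwards [ae_restrict_mem measurableSet_Ioi] with t (ht : 0 < t) u hu
    rw [norm_neg, smul_comm, norm_smul, norm_smul, norm_smul, norm_cexp_neg_ofReal_mul,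
      norm_cexp_neg_ofReal_mul, norm_real, Real.norm_of_nonneg ht.le, ← mul_assoc, ← mul_assoc]
    exact mul_le_mul_of_nonneg_right (mul_exp_neg_mul_le ht.le hδ (le_of_lt hu)) (norm_nonneg _)
  have eventually_meas : ∀ᶠ u : ℂ in 𝓝 z,
      AEStronglyMeasurable (fun t : ℝ ↦ cexp (-(t * u)) • g t) (volume.restrict (Ioi 0)) :=
    mem_of_superset half_plane_mem fun u (hu : w.re + δ < u.re) ↦
      (hg.mono_re (by linarith)).aestronglyMeasurable
  convert! (hasDerivAt_integral_of_dominated_loc_of_deriv_le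
    (F' := fun u (t : ℝ) ↦ -(cexp (-(t * u)) • (t : ℂ) • g t)) half_plane_mem eventually_meas
    (hg.mono_re hwz.le) deriv_meas deriv_le (hg.norm.const_mul _)
    (ae_of_all _ fun t u _ ↦ hasDerivAt_cexp_neg_mul_smul t (g t) u)).2 using 1
  exact (integral_neg _).symm

lemma eqOn_re_pos_of_eqOn_ofReal_pos [CompleteSpace E] {f g : ℂ → E}
    (hf : DifferentiableOn ℂ f {z | 0 < z.re}) (hg : DifferentiableOn ℂ g {z | 0 < z.re})
    (hfg : ∀ r : ℝ, 0 < r → f r = g r) : EqOn f g {z | 0 < z.re} := by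
  have half_plane_open : IsOpen {z : ℂ | 0 < z.re} := isOpen_lt continuous_const continuous_re
  have tendsto_one : Tendsto ((↑) : ℝ → ℂ) (𝓝[≠] 1) (𝓝[≠] 1) :=
    (continuous_ofReal.tendsto' 1 1 ofReal_one).inf (by simp)
  have eventually_eq : ∀ᶠ r : ℝ in 𝓝[≠] 1, f r = g r :=
    ((lt_mem_nhds one_pos).filter_mono nhdsWithin_le_nhds).mono hfg
  exact (hf.analyticOnNhd half_plane_open).eqOn_of_preconnected_of_frequently_eq
    (hg.analyticOnNhd half_plane_open) (convex_halfSpace_re_gt 0).isPreconnected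
    (by simp) (tendsto_one.frequently eventually_eq.frequently)

end VectorValued

lemma laplaceIntegrable_cpow {a z : ℂ} (ha : -1 < a.re) (hz : 0 < z.re) :
    LaplaceIntegrable (fun t : ℝ ↦ (t : ℂ) ^ a) z := by
  refine (integrableOn_rpow_mul_exp_neg_mul_rpow ha one_pos hz).mono' ?_ ?_
  · refine ContinuousOn.aestronglyMeasurable (fun t ht ↦ ?_) measurableSet_Ioi
    have cpow_continuousAt := continuousAt_ofReal_cpow_const t a (Or.inr (ne_of_gt ht))
    have cexp_continuous : Continuous fun t : ℝ ↦ cexp (-(t * z)) := by fun_prop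
    exact (cexp_continuous.continuousAt.smul cpow_continuousAt).continuousWithinAt
  · filter_upwards [ae_restrict_mem measurableSet_Ioi] with t ht
    rw [norm_smul, norm_cexp_neg_ofReal_mul, norm_cpow_eq_rpow_re_of_pos ht, Real.rpow_one,
      mul_comm, neg_mul, mul_comm t]

lemma laplaceIntegral_cpow_ofReal {s : ℂ} {r : ℝ} (hs : 0 < s.re) (hr : 0 < r) :
    laplaceIntegral (fun t : ℝ ↦ (t : ℂ) ^ (s - 1)) r = (r : ℂ) ^ (-s) * Gamma s := by
  rw [cpow_neg, ← inv_cpow_ofReal_nonneg hr.le, ← one_div,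
    ← integral_cpow_mul_exp_neg_mul_Ioi hs hr]
  simp only [laplaceIntegral, smul_eq_mul, mul_comm]

lemma laplaceIntegral_cpow {s z : ℂ} (hs : 0 < s.re) (hz : 0 < z.re) :
    laplaceIntegral (fun t : ℝ ↦ (t : ℂ) ^ (s - 1)) z = z ^ (-s) * Gamma s := by
  have hs' : -1 < (s - 1).re := by simpa using hs
  have differentiableOn_left : DifferentiableOn ℂ
      (laplaceIntegral fun t : ℝ ↦ (t : ℂ) ^ (s - 1)) {z | 0 < z.re} := by
    intro w (hw : 0 < w.re)
    have integrable_half : LaplaceIntegrable (fun t : ℝ ↦ (t : ℂ) ^ (s - 1)) ↑(w.re / 2) :=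
      laplaceIntegrable_cpow hs' (half_pos hw)
    exact (hasDerivAt_laplaceIntegral integrable_half
      (half_lt_self hw)).differentiableAt.differentiableWithinAt
  have differentiableOn_right :
      DifferentiableOn ℂ (fun z ↦ z ^ (-s) * Gamma s) {z | 0 < z.re} := fun w hw ↦
    ((differentiableAt_id.cpow_const (Or.inl hw)).mul_const _).differentiableWithinAt
  exact eqOn_re_pos_of_eqOn_ofReal_pos differentiableOn_left differentiableOn_right
    (fun _ ↦ laplaceIntegral_cpow_ofReal hs) hz

lemma ofReal_mul_cpow {t : ℝ} (ht : 0 ≤ t) (z a : ℂ) :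
    ((t : ℂ) * z) ^ a = (t : ℂ) ^ a * z ^ a := by
  rcases eq_or_ne a 0 with rfl | ha
  · simp
  rcases ht.eq_or_lt with rfl | ht
  · simp [ha]
  rcases eq_or_ne z 0 with rfl | hz
  · simp [ha]
  have ht₀ : (t : ℂ) ≠ 0 := ofReal_ne_zero.2 ht.ne'
  rw [cpow_def_of_ne_zero (mul_ne_zero ht₀ hz), cpow_def_of_ne_zero ht₀, cpow_def_of_ne_zero hz,
    log_ofReal_mul ht hz, ofReal_log ht.le, add_mul, Complex.exp_add]

/-- **Gamma integral along a ray.**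
Let `z ∈ ℂ` with `Re z > 0` and `s ∈ ℂ` with `Re s > 0`.  Then
`∫₀^∞ exp(-tz)·(tz)^{s-1}·z dt = Γ(s)` (principal complex powers), i.e. the integral of
`e^{-u}u^{s-1}` along the ray from `0` through `z` equals `Γ(s)`. -/
theorem stmt_4 (z s : ℂ) (hz : 0 < z.re) (hs : 0 < s.re) :
    ∫ t in Set.Ioi (0 : ℝ), Complex.exp (-((t : ℂ) * z)) * ((t : ℂ) * z) ^ (s - 1) * z
      = Complex.Gamma s := by
  have hz₀ : z ≠ 0 := ne_zero_of_re_pos hz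
  have integrand_eq (t : ℝ) (ht : t ∈ Ioi 0) :
      cexp (-(t * z)) * (t * z) ^ (s - 1) * z = z ^ s * (cexp (-(t * z)) • (t : ℂ) ^ (s - 1)) := by
    rw [ofReal_mul_cpow (le_of_lt ht), cpow_sub _ _ hz₀, cpow_one, smul_eq_mul]
    field_simp
  calc ∫ t in Ioi (0 : ℝ), cexp (-(t * z)) * (t * z) ^ (s - 1) * z
      = z ^ s * laplaceIntegral (fun t : ℝ ↦ (t : ℂ) ^ (s - 1)) z := by
        rw [setIntegral_congr_fun measurableSet_Ioi integrand_eq, integral_const_mul,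
          laplaceIntegral]
    _ = z ^ s * (z ^ (-s) * Gamma s) := by rw [laplaceIntegral_cpow hs hz]
    _ = Gamma s := by
        rw [← mul_assoc, ← cpow_add _ _ hz₀, add_neg_cancel, cpow_zero, one_mul]
end

section
/- Let α, β ∈ ℂ with Im β > 0 and Re(α² - 2iβ) > 0. Then ∫₀^∞ E(α·√t)·exp(2πiβt) dt = -α / (4πiβ·(α² - 2iβ)^{1/2}), where (α² - 2iβ)^{1/2} denotes the principal branch of the complex square root. -/
/-- `E(z) := ∫₀^z e^{-πu²} du`, the entire antiderivative of `e^{-πz²}` vanishing at `0`,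
realised as `∫₀¹ z·exp(-π t² z²) dt`. -/
noncomputable def E (z : ℂ) : ℂ :=
  ∫ t in (0 : ℝ)..1, z * Complex.exp (-(Real.pi : ℂ) * (t : ℂ) ^ 2 * z ^ 2)

/-!
Substituting `t = x²` turns the left-hand side into the integral of `2x · E(αx) · e^{-bx²}` with
`b = -2πiβ`. Integrating by parts against the primitive `-e^{-bx²}/(2b)` of `x · e^{-bx²}` replaces
`E(αx)` by its derivative `α e^{-πα²x²}` and leaves the half-line Gaussian integral with parameter
`πα² + b = π(α² - 2iβ)`. The integrals converge and the boundary terms vanish because the Gaussian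
parameter in `E(αx) · e^{-bx²} = ∫₀¹ αx · e^{-(t²(πα² + b) + (1 - t²)b)x²} dt` interpolates between
`b` and `πα² + b`, both of which have positive real part.
-/

open MeasureTheory Set Filter Topology Complex
open scoped Real

theorem E_zero : E 0 = 0 := by
  simp [E]

theorem hasDerivAt_E (z : ℂ) : HasDerivAt E (cexp (-π * z ^ 2)) z := by
  have gaussian_differentiable : Differentiable ℂ fun w : ℂ ↦ cexp (-π * w ^ 2) := by fun_prop
  obtain ⟨F, F_zero, hF⟩ := gaussian_differentiable.isExactOn_univ.with_val_at 0 0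
  suffices E_eq_primitive : E = F from E_eq_primitive ▸ hF z (mem_univ z)
  funext w
  have ftc_on_segment := intervalIntegral.integral_unitInterval_deriv_eq_sub
    (z₀ := 0) (z₁ := w) (f' := fun w : ℂ ↦ cexp (-π * w ^ 2)) (by fun_prop)
    fun t _ ↦ hF (0 + t • w) (mem_univ _)
  simpa only [E, zero_add, F_zero, sub_zero, smul_eq_mul, real_smul, mul_pow, mul_assoc,
    intervalIntegral.integral_const_mul] using ftc_on_segment

theorem continuous_E : Continuous E :=
  continuous_iff_continuousAt.2 fun z ↦ (hasDerivAt_E z).continuousAt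

theorem norm_E_mul_cexp_neg_le (z w : ℂ) :
    ‖E z * cexp (-w)‖ ≤ ‖z‖ * Real.exp (-min w.re (π * z ^ 2 + w).re) := by
  rw [E, ← intervalIntegral.integral_mul_const]
  refine (intervalIntegral.norm_integral_le_of_norm_le_const fun t ht ↦ ?_).trans_eq
    (by rw [sub_zero, abs_one, mul_one])
  rw [uIoc_of_le zero_le_one] at ht
  have sq_t_le_one : t ^ 2 ≤ 1 := pow_le_one₀ ht.1.le ht.2
  have exponent_eq : -π * (t : ℂ) ^ 2 * z ^ 2 + -w =
      -(((1 - t ^ 2 : ℝ) : ℂ) * w + ((t ^ 2 : ℝ) : ℂ) * (π * z ^ 2 + w)) := by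
    push_cast; ring
  rw [mul_assoc, ← Complex.exp_add, norm_mul, norm_exp, exponent_eq, neg_re, add_re,
    re_ofReal_mul, re_ofReal_mul]
  gcongr
  exact Convex.min_le_combo _ _ (sub_nonneg.2 sq_t_le_one) (sq_nonneg t) (sub_add_cancel 1 _)

theorem integral_Ioi_comp_sqrt {F : Type*} [NormedAddCommGroup F] [NormedSpace ℝ F] (f : ℝ → F) :
    ∫ t in Ioi (0 : ℝ), f √t = ∫ x in Ioi (0 : ℝ), (2 * x) • f x := by
  rw [← integral_comp_rpow_Ioi_of_pos two_pos]
  refine setIntegral_congr_fun measurableSet_Ioi fun x (hx : 0 < x) ↦ ?_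
  simp only [Real.rpow_two, Real.sqrt_sq hx.le, show (2 : ℝ) - 1 = 1 by norm_num, Real.rpow_one]

theorem hasDerivAt_cexp_neg_mul_sq (b : ℂ) (x : ℝ) :
    HasDerivAt (fun x : ℝ ↦ cexp (-b * (x : ℂ) ^ 2))
      (-(2 * b) * (x * cexp (-b * (x : ℂ) ^ 2))) x := by
  have chain_rule := ((hasDerivAt_pow 2 (x : ℂ)).const_mul (-b)).cexp.comp_ofReal
  refine chain_rule.congr_deriv ?_
  push_cast
  ring

theorem hasDerivAt_E_mul_ofReal (α : ℂ) (x : ℝ) :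
    HasDerivAt (fun x : ℝ ↦ E (α * x)) (α * cexp (-(π * α ^ 2) * (x : ℂ) ^ 2)) x := by
  have chain_rule := ((hasDerivAt_E (α * x)).comp (x : ℂ) (hasDerivAt_const_mul α)).comp_ofReal
  refine chain_rule.congr_deriv ?_
  ring_nf

theorem norm_E_mul_ofReal_mul_cexp_le (α b : ℂ) (x : ℝ) :
    ‖E (α * x) * cexp (-b * (x : ℂ) ^ 2)‖ ≤
      ‖α‖ * (|x| * Real.exp (-min b.re (π * α ^ 2 + b).re * x ^ 2)) := by
  have scaled_eq : π * (α * x) ^ 2 + b * (x : ℂ) ^ 2 = ((x ^ 2 : ℝ) : ℂ) * (π * α ^ 2 + b) := by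
    push_cast; ring
  have scaled_min : min (b * (x : ℂ) ^ 2).re (π * (α * x) ^ 2 + b * (x : ℂ) ^ 2).re =
      min b.re (π * α ^ 2 + b).re * x ^ 2 := by
    rw [scaled_eq, ← ofReal_pow, re_mul_ofReal, re_ofReal_mul, mul_comm (x ^ 2),
      min_mul_of_nonneg _ _ (sq_nonneg x)]
  have := norm_E_mul_cexp_neg_le (α * x) (b * (x : ℂ) ^ 2)
  rwa [scaled_min, norm_mul α, norm_real, Real.norm_eq_abs, mul_assoc, ← neg_mul, ← neg_mul] at this

section GaussianWeight

variable {α b : ℂ}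

theorem tendsto_E_mul_cexp_neg_mul_sq_cocompact
    (hb : 0 < b.re) (hαb : 0 < (π * α ^ 2 + b).re) :
    Tendsto (fun x : ℝ ↦ E (α * x) * cexp (-b * (x : ℂ) ^ 2)) (cocompact ℝ) (𝓝 0) := by
  refine squeeze_zero_norm (norm_E_mul_ofReal_mul_cexp_le α b) ?_
  simpa only [Real.rpow_one, mul_zero] using
    (tendsto_rpow_abs_mul_exp_neg_mul_sq_cocompact (lt_min hb hαb) 1).const_mul ‖α‖

theorem integrable_E_mul_mul_cexp_neg_mul_sq
    (hb : 0 < b.re) (hαb : 0 < (π * α ^ 2 + b).re) :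
    Integrable fun x : ℝ ↦ E (α * x) * (x * cexp (-b * (x : ℂ) ^ 2)) := by
  have dominating_integrable :=
    (integrable_rpow_mul_exp_neg_mul_sq (lt_min hb hαb) (s := 2) (by norm_num)).const_mul ‖α‖
  refine dominating_integrable.mono' ?_ (.of_forall fun x ↦ ?_)
  · have := continuous_E
    exact (by fun_prop : Continuous _).aestronglyMeasurable
  · calc ‖E (α * x) * (x * cexp (-b * (x : ℂ) ^ 2))‖
        = |x| * ‖E (α * x) * cexp (-b * (x : ℂ) ^ 2)‖ := by
          rw [mul_left_comm, norm_mul, norm_real, Real.norm_eq_abs]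
      _ ≤ |x| * (‖α‖ * (|x| * Real.exp (-min b.re (π * α ^ 2 + b).re * x ^ 2))) := by
          gcongr
          exact norm_E_mul_ofReal_mul_cexp_le α b x
      _ = ‖α‖ * (x ^ (2 : ℝ) * Real.exp (-min b.re (π * α ^ 2 + b).re * x ^ 2)) := by
          rw [Real.rpow_two, ← sq_abs x]; ring

theorem integral_Ioi_E_mul_mul_cexp_neg_mul_sq
    (hb : 0 < b.re) (hαb : 0 < (π * α ^ 2 + b).re) :
    ∫ x in Ioi (0 : ℝ), E (α * x) * (x * cexp (-b * (x : ℂ) ^ 2)) =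
      α / (4 * b) * (π / (π * α ^ 2 + b)) ^ (1 / 2 : ℂ) := by
  have b_ne_zero : b ≠ 0 := by rintro rfl; simp at hb
  have primitive_deriv (x : ℝ) : HasDerivAt (fun x : ℝ ↦ -(2 * b)⁻¹ * cexp (-b * (x : ℂ) ^ 2))
      (x * cexp (-b * (x : ℂ) ^ 2)) x := by
    refine ((hasDerivAt_cexp_neg_mul_sq b x).const_mul _).congr_deriv ?_
    field_simp
  have gaussian_eq (x : ℝ) : α * cexp (-(π * α ^ 2) * (x : ℂ) ^ 2) *
      (-(2 * b)⁻¹ * cexp (-b * (x : ℂ) ^ 2)) =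
        -(α / (2 * b)) * cexp (-(π * α ^ 2 + b) * (x : ℂ) ^ 2) := by
    rw [neg_add, add_mul, Complex.exp_add]; ring
  have tendsto_at_zero : Tendsto
      (fun x : ℝ ↦ E (α * x) * (-(2 * b)⁻¹ * cexp (-b * (x : ℂ) ^ 2))) (𝓝[>] 0) (𝓝 0) := by
    have := continuous_E
    exact tendsto_nhdsWithin_of_tendsto_nhds <|
      (by fun_prop : Continuous _).tendsto' _ _ (by simp [E_zero])
  have tendsto_at_top : Tendsto
      (fun x : ℝ ↦ E (α * x) * (-(2 * b)⁻¹ * cexp (-b * (x : ℂ) ^ 2))) atTop (𝓝 0) := by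
    simpa only [mul_left_comm, mul_zero] using
      ((tendsto_E_mul_cexp_neg_mul_sq_cocompact hb hαb).mono_left atTop_le_cocompact).const_mul
        (-(2 * b)⁻¹)
  rw [integral_Ioi_mul_deriv_eq_deriv_mul (fun x _ ↦ hasDerivAt_E_mul_ofReal α x)
    (fun x _ ↦ primitive_deriv x) (integrable_E_mul_mul_cexp_neg_mul_sq hb hαb).integrableOn
    (by simpa only [Pi.mul_def, gaussian_eq] using
      ((integrable_cexp_neg_mul_sq hαb).const_mul _).integrableOn) tendsto_at_zero tendsto_at_top]
  simp only [gaussian_eq, integral_const_mul, integral_gaussian_complex_Ioi hαb]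
  ring

theorem integral_Ioi_E_mul_sqrt_mul_cexp_neg_mul
    (hb : 0 < b.re) (hαb : 0 < (π * α ^ 2 + b).re) :
    ∫ t in Ioi (0 : ℝ), E (α * (√t : ℝ)) * cexp (-b * t) =
      α / (2 * b) * (π / (π * α ^ 2 + b)) ^ (1 / 2 : ℂ) := by
  calc ∫ t in Ioi (0 : ℝ), E (α * (√t : ℝ)) * cexp (-b * t)
      = ∫ t in Ioi (0 : ℝ), E (α * (√t : ℝ)) * cexp (-b * ((√t : ℝ) : ℂ) ^ 2) :=
        setIntegral_congr_fun measurableSet_Ioi fun t (ht : 0 < t) ↦ by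
          rw [← ofReal_pow, Real.sq_sqrt ht.le]
    _ = ∫ x in Ioi (0 : ℝ), (2 * x) • (E (α * x) * cexp (-b * (x : ℂ) ^ 2)) :=
        integral_Ioi_comp_sqrt fun x : ℝ ↦ E (α * x) * cexp (-b * (x : ℂ) ^ 2)
    _ = 2 * ∫ x in Ioi (0 : ℝ), E (α * x) * (x * cexp (-b * (x : ℂ) ^ 2)) := by
        simp only [← integral_const_mul, real_smul, ofReal_mul, ofReal_ofNat, mul_assoc,
          mul_left_comm (E _)]
    _ = α / (2 * b) * (π / (π * α ^ 2 + b)) ^ (1 / 2 : ℂ) := by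
        rw [integral_Ioi_E_mul_mul_cexp_neg_mul_sq hb hαb]; ring

end GaussianWeight

/-- **Lemma.**  For `α, β ∈ ℂ` with `Im β > 0` and `Re(α² - 2iβ) > 0`,
`∫₀^∞ E(α√t)·e(βt) dt = -α / (4πiβ·(α² - 2iβ)^{1/2})` (principal square root). -/
theorem stmt_5 (α β : ℂ) (hβ : 0 < β.im) (h : 0 < (α ^ 2 - 2 * Complex.I * β).re) :
    ∫ t in Set.Ioi (0 : ℝ),
        E (α * (Real.sqrt t : ℂ)) * Complex.exp (2 * (Real.pi : ℂ) * Complex.I * β * (t : ℂ))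
      = -α / (4 * (Real.pi : ℂ) * Complex.I * β * (α ^ 2 - 2 * Complex.I * β) ^ ((1 : ℂ) / 2)) := by
  have pi_ne_zero : (π : ℂ) ≠ 0 := ofReal_ne_zero.2 Real.pi_ne_zero
  have hb : 0 < (-(2 * π * I * β)).re := by
    simpa [Real.pi_pos] using hβ
  have parameter_eq : π * α ^ 2 + -(2 * π * I * β) = π * (α ^ 2 - 2 * I * β) := by ring
  have hαb : 0 < (π * α ^ 2 + -(2 * π * I * β)).re := by
    rw [parameter_eq, re_ofReal_mul]
    exact mul_pos Real.pi_pos h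
  have laplace_transform := integral_Ioi_E_mul_sqrt_mul_cexp_neg_mul hb hαb
  rw [neg_neg, parameter_eq, div_mul_cancel_left₀ pi_ne_zero,
    inv_cpow _ _ (slitPlane_arg_ne_pi (.inl h))] at laplace_transform
  rw [laplace_transform]
  ring
end

section
/- Let p₁ ∈ (0,1) and p₂ ∈ ℝ. For ξ in the upper half-plane ℍ = {ξ ∈ ℂ : Im ξ > 0} define φ_{p₁,p₂}(ξ) := (1 - e(p₁ξ + p₂)) · Π_{d=1}^∞ (1 - e((d+p₁)ξ + p₂)) / (1 - e((d-p₁)ξ - p₂)). Then: (i) for every ξ ∈ ℍ each factor is nonzero, the infinite product converges, and φ_{p₁,p₂}(ξ) ≠ 0; and (ii) there exists a unique continuous function L : ℍ → ℂ such that exp(L(ξ)) = φ_{p₁,p₂}(ξ) for all ξ ∈ ℍ and L(iy) → 0 as y → +∞. -/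
/-- `e(z) := exp(2πiz)`. -/
noncomputable def ec (z : ℂ) : ℂ := Complex.exp (2 * (Real.pi : ℂ) * Complex.I * z)

/-- `φ_{p₁,p₂}(ξ) := (1 - e(p₁ξ + p₂))·Π_{d=1}^∞ (1 - e((d+p₁)ξ + p₂))/(1 - e((d-p₁)ξ - p₂))`. -/
noncomputable def phi (p₁ p₂ : ℝ) (ξ : ℂ) : ℂ :=
  (1 - ec ((p₁ : ℂ) * ξ + (p₂ : ℂ))) *
    ∏' d : ℕ, (1 - ec (((d : ℂ) + 1 + (p₁ : ℂ)) * ξ + (p₂ : ℂ))) /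
      (1 - ec (((d : ℂ) + 1 - (p₁ : ℂ)) * ξ - (p₂ : ℂ)))

/-!
In the variables `q = e(ξ)`, `x = e(p₁ξ + p₂)` and `y = e((1 - p₁)ξ - p₂)`, all of which lie in the
open unit disc, `φ` is the quotient `(x; q)_∞ / (y; q)_∞` of two `q`-Pochhammer symbols. The series
`∑ log (1 - x q ^ d)` of principal logarithms converges locally uniformly for `‖x‖, ‖q‖ < 1`, so it
is a continuous logarithm of `(x; q)_∞`, and it vanishes at `x = 0`. Since `q, x, y → 0` as
`Im ξ → ∞`, the difference of the two series is a logarithm of `φ` with limit `0`. Two continuous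
logarithms on a connected set differ by a constant in `2πiℤ`, which the limit forces to be `0`.
-/

open Complex Filter Topology Metric

section ContinuousLogarithm

variable {X : Type*} [TopologicalSpace X] {S : Set X} {f g : X → ℂ}

theorem exists_int_forall_eq_add_of_exp_eq (hS : IsPreconnected S) (hf : ContinuousOn f S)
    (hg : ContinuousOn g S) (hfg : ∀ x ∈ S, exp (f x) = exp (g x)) :
    ∃ n : ℤ, ∀ x ∈ S, f x = g x + n * (2 * Real.pi * I) := by
  have maps_to_int : Set.MapsTo (fun x ↦ (f x - g x) / (2 * Real.pi * I)) S
      (Set.range ((↑) : ℤ → ℂ)) := by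
    intro x hx
    obtain ⟨n, hn⟩ := exp_eq_exp_iff_exists_int.1 (hfg x hx)
    exact ⟨n, (eq_div_iff two_pi_I_ne_zero).2 (sub_eq_of_eq_add' hn).symm⟩
  obtain ⟨_, ⟨n, rfl⟩, hn⟩ := hS.eqOn_const_of_mapsTo
    isClosedEmbedding_intCast.isInducing.isDiscrete_range ((hf.sub hg).div_const _)
    maps_to_int (Set.range_nonempty _)
  exact ⟨n, fun x hx ↦ eq_add_of_sub_eq' ((div_eq_iff two_pi_I_ne_zero).1 (hn hx))⟩

theorem eqOn_of_exp_eq_of_tendsto (hS : IsPreconnected S) (hf : ContinuousOn f S)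
    (hg : ContinuousOn g S) (hfg : ∀ x ∈ S, exp (f x) = exp (g x)) {l : Filter X} [l.NeBot]
    (hSl : S ∈ l) {c : ℂ} (hfl : Tendsto f l (𝓝 c)) (hgl : Tendsto g l (𝓝 c)) :
    Set.EqOn f g S := by
  obtain ⟨n, hn⟩ := exists_int_forall_eq_add_of_exp_eq hS hf hg hfg
  have f_tendsto : Tendsto f l (𝓝 (c + n * (2 * Real.pi * I))) :=
    (hgl.add_const _).congr' <| by filter_upwards [hSl] with x hx using (hn x hx).symm
  have period_eq_zero : (n : ℂ) * (2 * Real.pi * I) = 0 :=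
    left_eq_add.1 (tendsto_nhds_unique hfl f_tendsto)
  intro x hx
  rw [hn x hx, period_eq_zero, add_zero]

end ContinuousLogarithm

section LogQPochhammer

variable {x y q : ℂ}

theorem one_sub_mem_slitPlane_of_norm_lt_one {w : ℂ} (hw : ‖w‖ < 1) : 1 - w ∈ slitPlane := by
  rw [sub_eq_add_neg]
  exact mem_slitPlane_of_norm_lt_one (by rwa [norm_neg])

theorem one_sub_ne_zero_of_norm_lt_one {w : ℂ} (hw : ‖w‖ < 1) : 1 - w ≠ 0 :=
  slitPlane_ne_zero (one_sub_mem_slitPlane_of_norm_lt_one hw)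

theorem norm_log_one_sub_le_div {w : ℂ} (hw : ‖w‖ < 1) : ‖log (1 - w)‖ ≤ ‖w‖ / (1 - ‖w‖) := by
  have one_sub_pos : 0 < 1 - ‖w‖ := sub_pos.2 hw
  calc ‖log (1 - w)‖ ≤ ‖w‖ ^ 2 * (1 - ‖w‖)⁻¹ / 2 + ‖w‖ := by
        simpa [sub_eq_add_neg] using norm_log_one_add_le (z := -w) (by rwa [norm_neg])
    _ ≤ ‖w‖ ^ 2 * (1 - ‖w‖)⁻¹ + ‖w‖ := by gcongr; exact half_le_self (by positivity)
    _ = ‖w‖ / (1 - ‖w‖) := by field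

theorem norm_mul_pow_lt_one (hx : ‖x‖ < 1) (hq : ‖q‖ < 1) (d : ℕ) : ‖x * q ^ d‖ < 1 := by
  rw [norm_mul, norm_pow]
  exact mul_lt_one_of_nonneg_of_lt_one_left (norm_nonneg x) hx
    (pow_le_one₀ (norm_nonneg q) hq.le)

theorem norm_log_one_sub_mul_pow_le {r : ℝ} (hr : r < 1) (hx : ‖x‖ ≤ r) (hq : ‖q‖ ≤ r) (d : ℕ) :
    ‖log (1 - x * q ^ d)‖ ≤ r / (1 - r) * r ^ d := by
  have norm_lt_one : ‖x * q ^ d‖ < 1 := norm_mul_pow_lt_one (hx.trans_lt hr) (hq.trans_lt hr) d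
  have norm_le : ‖x * q ^ d‖ ≤ r * r ^ d := by
    rw [norm_mul, norm_pow]
    gcongr
    exact (norm_nonneg x).trans hx
  have norm_le_radius : ‖x * q ^ d‖ ≤ r := by
    rw [norm_mul, norm_pow]
    exact (mul_le_of_le_one_right (norm_nonneg x)
      (pow_le_one₀ (norm_nonneg q) (hq.trans hr.le))).trans hx
  calc ‖log (1 - x * q ^ d)‖ ≤ ‖x * q ^ d‖ / (1 - ‖x * q ^ d‖) :=
        norm_log_one_sub_le_div norm_lt_one
    _ ≤ r * r ^ d / (1 - r) :=
        div_le_div₀ ((norm_nonneg _).trans norm_le) norm_le (sub_pos.2 hr)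
          (sub_le_sub_left norm_le_radius 1)
    _ = r / (1 - r) * r ^ d := by ring

theorem summable_log_one_sub_mul_pow (hx : ‖x‖ < 1) (hq : ‖q‖ < 1) :
    Summable fun d : ℕ ↦ log (1 - x * q ^ d) :=
  .of_norm_bounded
    ((summable_geometric_of_lt_one ((norm_nonneg x).trans (le_max_left _ _))
      (max_lt hx hq)).mul_left _)
    (norm_log_one_sub_mul_pow_le (max_lt hx hq) (le_max_left _ _) (le_max_right _ _))

/-- The logarithm of the `q`-Pochhammer symbol `(x; q)_∞ = ∏ (1 - x q ^ d)` on the unit bidisc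
`‖x‖, ‖q‖ < 1`, as the sum of the principal logarithms of its factors. -/
noncomputable def logQPochhammer (x q : ℂ) : ℂ := ∑' d : ℕ, log (1 - x * q ^ d)

theorem logQPochhammer_zero_left (q : ℂ) : logQPochhammer 0 q = 0 := by simp [logQPochhammer]

theorem logQPochhammer_eq_log_add (hx : ‖x‖ < 1) (hq : ‖q‖ < 1) :
    logQPochhammer x q = log (1 - x) + logQPochhammer (x * q) q := by
  simp only [logQPochhammer, (summable_log_one_sub_mul_pow hx hq).tsum_eq_zero_add, pow_zero,
    mul_one, pow_succ', mul_assoc]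

theorem hasProd_one_sub_mul_pow (hx : ‖x‖ < 1) (hq : ‖q‖ < 1) :
    HasProd (fun d : ℕ ↦ 1 - x * q ^ d) (exp (logQPochhammer x q)) :=
  hasProd_of_hasSum_log (fun d ↦ one_sub_ne_zero_of_norm_lt_one (norm_mul_pow_lt_one hx hq d))
    (summable_log_one_sub_mul_pow hx hq).hasSum

theorem hasProd_one_sub_mul_pow_div (hx : ‖x‖ < 1) (hy : ‖y‖ < 1) (hq : ‖q‖ < 1) :
    HasProd (fun d : ℕ ↦ (1 - x * q ^ d) / (1 - y * q ^ d))
      (exp (logQPochhammer x q - logQPochhammer y q)) := by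
  rw [exp_sub]
  exact (hasProd_one_sub_mul_pow hx hq).div₀ (hasProd_one_sub_mul_pow hy hq) (exp_ne_zero _)

theorem continuousOn_logQPochhammer :
    ContinuousOn (fun p : ℂ × ℂ ↦ logQPochhammer p.1 p.2) (ball 0 1) := by
  intro p hp
  obtain ⟨r, hpr, hr⟩ := exists_between (mem_ball_zero_iff.1 hp)
  have norm_fst_le {p : ℂ × ℂ} (hp : p ∈ ball 0 r) : ‖p.1‖ ≤ r :=
    (norm_fst_le p).trans (mem_ball_zero_iff.1 hp).le
  have norm_snd_le {p : ℂ × ℂ} (hp : p ∈ ball 0 r) : ‖p.2‖ ≤ r :=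
    (norm_snd_le p).trans (mem_ball_zero_iff.1 hp).le
  have continuousOn_ball :
      ContinuousOn (fun p : ℂ × ℂ ↦ logQPochhammer p.1 p.2) (ball 0 r) := by
    refine continuousOn_tsum (fun d ↦ ContinuousOn.clog (by fun_prop) fun p hp ↦ ?_)
      ((summable_geometric_of_lt_one ((norm_nonneg p).trans hpr.le) hr).mul_left _)
      fun d p hp ↦ norm_log_one_sub_mul_pow_le hr (norm_fst_le hp) (norm_snd_le hp) d
    exact one_sub_mem_slitPlane_of_norm_lt_one
      (norm_mul_pow_lt_one ((norm_fst_le hp).trans_lt hr) ((norm_snd_le hp).trans_lt hr) d)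
  exact (continuousOn_ball.continuousAt
    (isOpen_ball.mem_nhds (mem_ball_zero_iff.2 hpr))).continuousWithinAt

theorem tendsto_logQPochhammer_zero {α : Type*} {l : Filter α} {u v : α → ℂ}
    (hu : Tendsto u l (𝓝 0)) (hv : Tendsto v l (𝓝 0)) :
    Tendsto (fun a ↦ logQPochhammer (u a) (v a)) l (𝓝 0) := by
  have continuousAt_zero : ContinuousAt (fun p : ℂ × ℂ ↦ logQPochhammer p.1 p.2) (0, 0) :=
    continuousOn_logQPochhammer.continuousAt (ball_mem_nhds 0 one_pos)
  simpa only [logQPochhammer_zero_left, Function.comp_def] using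
    continuousAt_zero.tendsto.comp (hu.prodMk_nhds hv)

end LogQPochhammer

section Exponential

theorem ec_eq_qParam (z : ℂ) : ec z = Function.Periodic.qParam 1 z := by
  simp [ec, Function.Periodic.qParam]

theorem continuous_ec : Continuous ec := by
  unfold ec
  fun_prop

theorem ec_nat_mul_add (d : ℕ) (ξ z : ℂ) : ec (d * ξ + z) = ec z * ec ξ ^ d := by
  simp only [ec, ← exp_nat_mul, ← exp_add]
  ring_nf

theorem norm_ec_lt_one {z : ℂ} (hz : 0 < z.im) : ‖ec z‖ < 1 := by
  rw [ec_eq_qParam]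
  exact Function.Periodic.norm_qParam_lt_one one_pos hz

theorem tendsto_ec_comap_im_atTop : Tendsto ec (comap im atTop) (𝓝 0) := by
  simpa only [← funext ec_eq_qParam] using
    (Function.Periodic.qParam_tendsto one_pos).mono_right nhdsWithin_le_nhds

variable {a : ℝ}

theorem norm_ec_mul_add_lt_one (ha : 0 < a) (b : ℝ) {ξ : ℂ} (hξ : 0 < ξ.im) :
    ‖ec (a * ξ + b)‖ < 1 :=
  norm_ec_lt_one (by simpa using mul_pos ha hξ)

theorem tendsto_ec_mul_add_comap_im_atTop (ha : 0 < a) (b : ℝ) :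
    Tendsto (fun ξ : ℂ ↦ ec (a * ξ + b)) (comap im atTop) (𝓝 0) := by
  refine tendsto_ec_comap_im_atTop.comp (tendsto_comap_iff.2 ?_)
  simpa [Function.comp_def] using tendsto_comap.const_mul_atTop ha

theorem continuousOn_logQPochhammer_ec (ha : 0 < a) (b : ℝ) :
    ContinuousOn (fun ξ : ℂ ↦ logQPochhammer (ec (a * ξ + b)) (ec ξ)) {ξ : ℂ | 0 < ξ.im} := by
  refine continuousOn_logQPochhammer.comp (f := fun ξ : ℂ ↦ (ec (a * ξ + b), ec ξ))
    ((continuous_ec.comp (by fun_prop)).prodMk continuous_ec).continuousOn fun ξ hξ ↦ ?_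
  rw [mem_ball_zero_iff, Prod.norm_mk]
  exact max_lt (norm_ec_mul_add_lt_one ha b hξ) (norm_ec_lt_one hξ)

theorem tendsto_logQPochhammer_ec (ha : 0 < a) (b : ℝ) :
    Tendsto (fun ξ : ℂ ↦ logQPochhammer (ec (a * ξ + b)) (ec ξ)) (comap im atTop) (𝓝 0) :=
  tendsto_logQPochhammer_zero (tendsto_ec_mul_add_comap_im_atTop ha b) tendsto_ec_comap_im_atTop

end Exponential

section LogPhi

variable {p₁ : ℝ} {ξ : ℂ}

theorem ec_add_one_add_mul_add (p₁ p₂ : ℝ) (ξ : ℂ) (d : ℕ) :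
    ec (((d : ℂ) + 1 + p₁) * ξ + p₂) = ec (p₁ * ξ + p₂) * ec ξ * ec ξ ^ d := by
  rw [mul_assoc, ← pow_succ', ← ec_nat_mul_add]
  push_cast
  ring_nf

theorem ec_add_one_sub_mul_sub (p₁ p₂ : ℝ) (ξ : ℂ) (d : ℕ) :
    ec (((d : ℂ) + 1 - p₁) * ξ - p₂) =
      ec ((1 - p₁ : ℝ) * ξ + (-p₂ : ℝ)) * ec ξ ^ d := by
  rw [← ec_nat_mul_add]
  push_cast
  ring_nf

theorem one_sub_ec_mul_add_ne_zero (h0 : 0 < p₁) (p₂ : ℝ) (hξ : 0 < ξ.im) :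
    1 - ec (p₁ * ξ + p₂) ≠ 0 :=
  one_sub_ne_zero_of_norm_lt_one (norm_ec_mul_add_lt_one h0 p₂ hξ)

theorem one_sub_ec_numerator_ne_zero (h0 : 0 < p₁) (p₂ : ℝ) (hξ : 0 < ξ.im) (d : ℕ) :
    1 - ec (((d : ℂ) + 1 + p₁) * ξ + p₂) ≠ 0 :=
  mod_cast one_sub_ec_mul_add_ne_zero (by positivity : 0 < (d : ℝ) + 1 + p₁) p₂ hξ

theorem one_sub_ec_denominator_ne_zero (h1 : p₁ < 1) (p₂ : ℝ) (hξ : 0 < ξ.im) (d : ℕ) :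
    1 - ec (((d : ℂ) + 1 - p₁) * ξ - p₂) ≠ 0 := by
  rw [ec_add_one_sub_mul_sub]
  exact one_sub_ne_zero_of_norm_lt_one (norm_mul_pow_lt_one
    (norm_ec_mul_add_lt_one (sub_pos.2 h1) (-p₂) hξ) (norm_ec_lt_one hξ) d)

theorem hasProd_phi_factors (h0 : 0 < p₁) (h1 : p₁ < 1) (p₂ : ℝ) (hξ : 0 < ξ.im) :
    HasProd (fun d : ℕ ↦ (1 - ec (((d : ℂ) + 1 + p₁) * ξ + p₂)) /
        (1 - ec (((d : ℂ) + 1 - p₁) * ξ - p₂)))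
      (exp (logQPochhammer (ec (p₁ * ξ + p₂) * ec ξ) (ec ξ) -
        logQPochhammer (ec ((1 - p₁ : ℝ) * ξ + (-p₂ : ℝ))) (ec ξ))) := by
  have norm_q_lt_one : ‖ec ξ‖ < 1 := norm_ec_lt_one hξ
  have norm_xq_lt_one : ‖ec (p₁ * ξ + p₂) * ec ξ‖ < 1 := by
    simpa only [pow_one] using norm_mul_pow_lt_one (norm_ec_mul_add_lt_one h0 p₂ hξ) norm_q_lt_one 1
  simp only [ec_add_one_add_mul_add, ec_add_one_sub_mul_sub]
  exact hasProd_one_sub_mul_pow_div norm_xq_lt_one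
    (norm_ec_mul_add_lt_one (sub_pos.2 h1) (-p₂) hξ) norm_q_lt_one

/-- The distinguished logarithm of `φ_{p₁,p₂}` on the upper half-plane, read off from
`φ_{p₁,p₂} = (x; q)_∞ / (y; q)_∞` with `x = e(p₁ξ + p₂)`, `y = e((1 - p₁)ξ - p₂)`, `q = e(ξ)`. -/
noncomputable def logPhi (p₁ p₂ : ℝ) (ξ : ℂ) : ℂ :=
  logQPochhammer (ec (p₁ * ξ + p₂)) (ec ξ) -
    logQPochhammer (ec ((1 - p₁ : ℝ) * ξ + (-p₂ : ℝ))) (ec ξ)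

theorem exp_logPhi (h0 : 0 < p₁) (h1 : p₁ < 1) (p₂ : ℝ) (hξ : 0 < ξ.im) :
    exp (logPhi p₁ p₂ ξ) = phi p₁ p₂ ξ := by
  rw [logPhi, phi, (hasProd_phi_factors h0 h1 p₂ hξ).tprod_eq,
    logQPochhammer_eq_log_add (norm_ec_mul_add_lt_one h0 p₂ hξ) (norm_ec_lt_one hξ), add_sub_assoc,
    exp_add, exp_log (one_sub_ec_mul_add_ne_zero h0 p₂ hξ)]

theorem phi_ne_zero (h0 : 0 < p₁) (h1 : p₁ < 1) (p₂ : ℝ) (hξ : 0 < ξ.im) : phi p₁ p₂ ξ ≠ 0 :=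
  exp_logPhi h0 h1 p₂ hξ ▸ exp_ne_zero _

theorem continuousOn_logPhi (h0 : 0 < p₁) (h1 : p₁ < 1) (p₂ : ℝ) :
    ContinuousOn (logPhi p₁ p₂) {ξ : ℂ | 0 < ξ.im} :=
  (continuousOn_logQPochhammer_ec h0 p₂).sub
    (continuousOn_logQPochhammer_ec (sub_pos.2 h1) (-p₂))

theorem tendsto_logPhi_comap_im_atTop (h0 : 0 < p₁) (h1 : p₁ < 1) (p₂ : ℝ) :
    Tendsto (logPhi p₁ p₂) (comap im atTop) (𝓝 0) := by
  rw [← sub_zero (0 : ℂ)]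
  exact (tendsto_logQPochhammer_ec h0 p₂).sub
    (tendsto_logQPochhammer_ec (sub_pos.2 h1) (-p₂))

end LogPhi

theorem tendsto_I_mul_comap_im_atTop :
    Tendsto (fun y : ℝ ↦ I * (y : ℂ)) atTop (comap im atTop) :=
  tendsto_comap_iff.2 <| tendsto_id.congr fun y ↦ by simp

/-- **The distinguished continuous logarithm of `φ_{p₁,p₂}`.**
For `p₁ ∈ (0,1)` and `p₂ ∈ ℝ`: (i) on the upper half-plane each factor of the product
defining `φ_{p₁,p₂}` is nonzero, the infinite product converges, and `φ_{p₁,p₂}(ξ) ≠ 0`;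
(ii) there is a continuous `L` on the upper half-plane with `exp(L(ξ)) = φ_{p₁,p₂}(ξ)`
and `L(iy) → 0` as `y → +∞`, unique as a function on the upper half-plane. -/
theorem stmt_10 (p₁ p₂ : ℝ) (h0 : 0 < p₁) (h1 : p₁ < 1) :
    (∀ ξ : ℂ, 0 < ξ.im →
      (1 - ec ((p₁ : ℂ) * ξ + (p₂ : ℂ)) ≠ 0) ∧
      (∀ d : ℕ, (1 - ec (((d : ℂ) + 1 + (p₁ : ℂ)) * ξ + (p₂ : ℂ))) ≠ 0 ∧
        (1 - ec (((d : ℂ) + 1 - (p₁ : ℂ)) * ξ - (p₂ : ℂ))) ≠ 0) ∧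
      Multipliable (fun d : ℕ => (1 - ec (((d : ℂ) + 1 + (p₁ : ℂ)) * ξ + (p₂ : ℂ))) /
        (1 - ec (((d : ℂ) + 1 - (p₁ : ℂ)) * ξ - (p₂ : ℂ)))) ∧
      phi p₁ p₂ ξ ≠ 0) ∧
    (∃ L : ℂ → ℂ,
      (ContinuousOn L {ξ : ℂ | 0 < ξ.im} ∧
        (∀ ξ : ℂ, 0 < ξ.im → Complex.exp (L ξ) = phi p₁ p₂ ξ) ∧
        Filter.Tendsto (fun y : ℝ => L (Complex.I * (y : ℂ))) Filter.atTop (nhds 0)) ∧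
      ∀ L' : ℂ → ℂ,
        (ContinuousOn L' {ξ : ℂ | 0 < ξ.im} ∧
          (∀ ξ : ℂ, 0 < ξ.im → Complex.exp (L' ξ) = phi p₁ p₂ ξ) ∧
          Filter.Tendsto (fun y : ℝ => L' (Complex.I * (y : ℂ))) Filter.atTop (nhds 0)) →
        Set.EqOn L L' {ξ : ℂ | 0 < ξ.im}) := by
  have logPhi_tendsto : Tendsto (fun y : ℝ ↦ logPhi p₁ p₂ (I * (y : ℂ))) atTop (𝓝 0) :=
    (tendsto_logPhi_comap_im_atTop h0 h1 p₂).comp tendsto_I_mul_comap_im_atTop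
  refine ⟨fun ξ hξ ↦ ⟨one_sub_ec_mul_add_ne_zero h0 p₂ hξ,
      fun d ↦ ⟨one_sub_ec_numerator_ne_zero h0 p₂ hξ d, one_sub_ec_denominator_ne_zero h1 p₂ hξ d⟩,
      (hasProd_phi_factors h0 h1 p₂ hξ).multipliable, phi_ne_zero h0 h1 p₂ hξ⟩,
    logPhi p₁ p₂,
    ⟨continuousOn_logPhi h0 h1 p₂, fun ξ hξ ↦ exp_logPhi h0 h1 p₂ hξ, logPhi_tendsto⟩, ?_⟩
  rintro L' ⟨L'_continuousOn, exp_L', L'_tendsto⟩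
  have upperHalfPlane_mem : {ξ : ℂ | 0 < ξ.im} ∈ map (fun y : ℝ ↦ I * (y : ℂ)) atTop :=
    mem_map.2 <| (eventually_gt_atTop 0).mono fun y hy ↦ by simpa using hy
  exact eqOn_of_exp_eq_of_tendsto (convex_halfSpace_im_gt 0).isPreconnected
    (continuousOn_logPhi h0 h1 p₂) L'_continuousOn
    (fun ξ hξ ↦ (exp_logPhi h0 h1 p₂ hξ).trans (exp_L' ξ hξ).symm) upperHalfPlane_mem
    (tendsto_map'_iff.2 logPhi_tendsto) (tendsto_map'_iff.2 L'_tendsto)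
end

section
/- Let M be a real symmetric 2×2 matrix with det M < 0 (signature (1,1)) and let c ∈ ℝ² with cᵀMc < 0. Then the real symmetric 2×2 matrix M - (2/(cᵀMc))·(Mc)(Mc)ᵀ is positive definite. -/
open Matrix

/-!
Let `q = cᵀMc`. Splitting `x = t c + y` with `cᵀMy = 0`, the rank-one correction only changes the
value of the form on the line through `c`, from `t² q` to `-t² q > 0`. It therefore suffices that
`M` is positive on the `M`-orthogonal complement of `c`. In dimension two this follows from the
determinant of the Gram matrix of `c` and `y`, namely `q · yᵀMy = (det [c, y])² · det M < 0`.
-/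

section CommRing

variable {n R : Type*} [Fintype n] [CommRing R] {M : Matrix n n R}

theorem dotProduct_mulVec_comm_of_isSymm (hM : M.IsSymm) (x y : n → R) :
    x ⬝ᵥ M *ᵥ y = y ⬝ᵥ M *ᵥ x := by
  rw [← dotProduct_transpose_mulVec, hM.eq]

theorem dotProduct_sub_smul_vecMulVec_self_mulVec (M : Matrix n n R) (a : R) (v x : n → R) :
    x ⬝ᵥ (M - a • vecMulVec v v) *ᵥ x = x ⬝ᵥ M *ᵥ x - a * (x ⬝ᵥ v) ^ 2 := by
  simp only [sub_mulVec, smul_mulVec, vecMulVec_mulVec, op_smul_eq_smul, dotProduct_sub,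
    dotProduct_smul, smul_eq_mul, dotProduct_comm v x, sq]

theorem dotProduct_mulVec_smul_add_of_orthogonal (hM : M.IsSymm) {c y : n → R}
    (hy : c ⬝ᵥ M *ᵥ y = 0) (t : R) :
    (t • c + y) ⬝ᵥ M *ᵥ (t • c + y) = t ^ 2 * (c ⬝ᵥ M *ᵥ c) + y ⬝ᵥ M *ᵥ y := by
  have hy' : y ⬝ᵥ M *ᵥ c = 0 := by rw [dotProduct_mulVec_comm_of_isSymm hM, hy]
  simp only [mulVec_add, mulVec_smul, add_dotProduct, dotProduct_add, smul_dotProduct,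
    dotProduct_smul, smul_eq_mul, hy, hy']
  ring

theorem gram_det_fin_two {M : Matrix (Fin 2) (Fin 2) R} (hM : M.IsSymm) (x y : Fin 2 → R) :
    (x ⬝ᵥ M *ᵥ x) * (y ⬝ᵥ M *ᵥ y) - (x ⬝ᵥ M *ᵥ y) ^ 2 = (of ![x, y]).det ^ 2 * M.det := by
  simp only [det_fin_two, dotProduct, mulVec, Fin.sum_univ_two, hM.apply 0 1, of_apply,
    cons_val_zero, cons_val_one]
  ring

end CommRing

section Field

variable {n K : Type*} [Fintype n] [Field K] {M : Matrix n n K} {c : n → K}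

theorem exists_eq_smul_add_orthogonal (hc : c ⬝ᵥ M *ᵥ c ≠ 0) (x : n → K) :
    ∃ (t : K) (y : n → K), c ⬝ᵥ M *ᵥ y = 0 ∧ x = t • c + y := by
  refine ⟨c ⬝ᵥ M *ᵥ x / c ⬝ᵥ M *ᵥ c, x - (c ⬝ᵥ M *ᵥ x / c ⬝ᵥ M *ᵥ c) • c, ?_, by abel⟩
  rw [mulVec_sub, mulVec_smul, dotProduct_sub, dotProduct_smul, smul_eq_mul,
    div_mul_cancel₀ _ hc, sub_self]

theorem dotProduct_sub_two_div_smul_vecMulVec_mulVec_smul_add (hM : M.IsSymm)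
    {y : n → K} (hy : c ⬝ᵥ M *ᵥ y = 0) (t : K) :
    (t • c + y) ⬝ᵥ (M - (2 / (c ⬝ᵥ M *ᵥ c)) • vecMulVec (M *ᵥ c) (M *ᵥ c)) *ᵥ (t • c + y) =
      -(t ^ 2 * (c ⬝ᵥ M *ᵥ c)) + y ⬝ᵥ M *ᵥ y := by
  have hproj : (t • c + y) ⬝ᵥ M *ᵥ c = t * (c ⬝ᵥ M *ᵥ c) := by
    rw [add_dotProduct, smul_dotProduct, smul_eq_mul, dotProduct_mulVec_comm_of_isSymm hM y, hy,
      add_zero]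
  rw [dotProduct_sub_smul_vecMulVec_self_mulVec, dotProduct_mulVec_smul_add_of_orthogonal hM hy,
    hproj]
  field_simp
  ring

theorem linearIndependent_pair_of_orthogonal (hc : c ⬝ᵥ M *ᵥ c ≠ 0) {y : n → K} (hy₀ : y ≠ 0)
    (hy : c ⬝ᵥ M *ᵥ y = 0) : LinearIndependent K ![c, y] := by
  refine LinearIndependent.pair_iff.2 fun s t hst ↦ ?_
  have hs : s = 0 := by
    have h : c ⬝ᵥ M *ᵥ (s • c + t • y) = 0 := by rw [hst, mulVec_zero, dotProduct_zero]
    simpa [mulVec_add, mulVec_smul, hy, hc] using h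
  exact ⟨hs, by simpa [hs, hy₀] using hst⟩

end Field

section LinearOrderedField

variable {n K : Type*} [Fintype n] [Field K] [LinearOrder K] [IsStrictOrderedRing K]

theorem dotProduct_mulVec_pos_of_orthogonal_of_det_neg {M : Matrix (Fin 2) (Fin 2) K}
    (hM : M.IsSymm) (hdet : M.det < 0) {c y : Fin 2 → K} (hc : c ⬝ᵥ M *ᵥ c < 0) (hy₀ : y ≠ 0)
    (hy : c ⬝ᵥ M *ᵥ y = 0) : 0 < y ⬝ᵥ M *ᵥ y := by
  have hdet_ne : (of ![c, y]).det ≠ 0 :=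
    ((isUnit_iff_isUnit_det _).1 <| linearIndependent_rows_iff_isUnit.1 <|
      linearIndependent_pair_of_orthogonal hc.ne hy₀ hy).ne_zero
  have hgram : (c ⬝ᵥ M *ᵥ c) * (y ⬝ᵥ M *ᵥ y) < 0 := by
    calc (c ⬝ᵥ M *ᵥ c) * (y ⬝ᵥ M *ᵥ y) = (of ![c, y]).det ^ 2 * M.det := by
          rw [← gram_det_fin_two hM, hy]; ring
      _ < 0 := mul_neg_of_pos_of_neg (sq_pos_of_ne_zero hdet_ne) hdet
  exact pos_of_mul_neg_right hgram hc.le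

variable [StarRing K] [TrivialStar K]

theorem posDef_sub_two_div_smul_vecMulVec_of_pos_on_orthogonal {M : Matrix n n K}
    (hM : M.IsSymm) {c : n → K} (hc : c ⬝ᵥ M *ᵥ c < 0)
    (hpos : ∀ y, y ≠ 0 → c ⬝ᵥ M *ᵥ y = 0 → 0 < y ⬝ᵥ M *ᵥ y) :
    (M - (2 / (c ⬝ᵥ M *ᵥ c)) • vecMulVec (M *ᵥ c) (M *ᵥ c)).PosDef := by
  refine .of_dotProduct_mulVec_pos ?_ fun x hx ↦ ?_
  · exact isHermitian_iff_isSymm.2 (hM.sub (IsSymm.smul (transpose_vecMulVec _ _) _))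
  obtain ⟨t, y, hy, rfl⟩ := exists_eq_smul_add_orthogonal hc.ne x
  rw [star_trivial, dotProduct_sub_two_div_smul_vecMulVec_mulVec_smul_add hM hy]
  rcases eq_or_ne y 0 with rfl | hy₀
  · have ht : t ≠ 0 := by rintro rfl; simp at hx
    simpa using mul_neg_of_pos_of_neg (sq_pos_of_ne_zero ht) hc
  · have hline : t ^ 2 * (c ⬝ᵥ M *ᵥ c) ≤ 0 := mul_nonpos_of_nonneg_of_nonpos (sq_nonneg t) hc.le
    exact add_pos_of_nonneg_of_pos (neg_nonneg.2 hline) (hpos y hy₀ hy)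

theorem stmt_11_general {M : Matrix (Fin 2) (Fin 2) K} (hM : M.IsSymm) (hdet : M.det < 0)
    {c : Fin 2 → K} (hc : c ⬝ᵥ M *ᵥ c < 0) :
    (M - (2 / (c ⬝ᵥ M *ᵥ c)) • vecMulVec (M *ᵥ c) (M *ᵥ c)).PosDef :=
  posDef_sub_two_div_smul_vecMulVec_of_pos_on_orthogonal hM hc fun _ hy₀ hy ↦
    dotProduct_mulVec_pos_of_orthogonal_of_det_neg hM hdet hc hy₀ hy

end LinearOrderedField

/-- **Positive definiteness of `Im Λ_Ω^c`.**
Let `M` be a real symmetric 2×2 matrix with `det M < 0` (signature `(1,1)`) and `c ∈ ℝ²`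
with `cᵀMc < 0`.  Then `M - (2/(cᵀMc))·(Mc)(Mc)ᵀ` is positive definite. -/
theorem stmt_11 (M : Matrix (Fin 2) (Fin 2) ℝ) (hM : M.IsSymm) (hdet : M.det < 0)
    (c : Fin 2 → ℝ) (hc : c ⬝ᵥ M.mulVec c < 0) :
    (M - (2 / (c ⬝ᵥ M.mulVec c)) • Matrix.vecMulVec (M.mulVec c) (M.mulVec c)).PosDef :=
  stmt_11_general hM hdet hc
end
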